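/- If the matching problem has a unique stable matching μ, then the normal form equals the graph of μ, that is, S* = {(w, μ(w)) : w ∈ W}. -/

import Mathlib

/-- `(w,f)` blocks the matching `μ`: `f ≻_w μ(w)` and `w ≻_f μ⁻¹(f)`.
`prefW w f f'` means worker `w` strictly prefers firm `f` to firm `f'`;
`prefF f w w'` means firm `f` strictly prefers worker `w` to worker `w'`. -/
def Blocks {W F : Type*} (prefW : W → F → F → Prop) (prefF : F → W → W → Prop)
    (μ : W ≃ F) (w : W) (f : F) : Prop :=
  prefW w f (μ w) ∧ prefF f w (μ.symm f)

/-- A matching is stable if no pair blocks it. -/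
def IsStableMatching {W F : Type*} (prefW : W → F → F → Prop)
    (prefF : F → W → W → Prop) (μ : W ≃ F) : Prop :=
  ∀ w f, ¬ Blocks prefW prefF μ w f

/-- A pair `(w,f)` is unattractive in `S`. -/
def Unattractive {W F : Type*} (prefW : W → F → F → Prop) (prefF : F → W → W → Prop)
    (S : Set (W × F)) (w : W) (f : F) : Prop :=
  (∃ f', (w, f') ∈ S ∧ prefW w f' f ∧
      ∀ w', w' ≠ w → (w', f') ∈ S → prefF f' w w') ∨
  (∃ w', (w', f) ∈ S ∧ prefF f w' w ∧
      ∀ f'', f'' ≠ f → (w', f'') ∈ S → prefW w' f f'')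

/-- `delta S` is `S` with all pairs unattractive in `S` removed. -/
def delta {W F : Type*} (prefW : W → F → F → Prop) (prefF : F → W → W → Prop)
    (S : Set (W × F)) : Set (W × F) :=
  {p ∈ S | ¬ Unattractive prefW prefF S p.1 p.2}

/-- The normal form: the fixed point of `delta` reached by iterating from `W × F`.
Since `delta S ⊆ S` and `W × F` is finite, `Fintype.card (W × F)` iterations suffice. -/
def NormalForm (W F : Type*) [Fintype W] [Fintype F]
    (prefW : W → F → F → Prop) (prefF : F → W → W → Prop) : Set (W × F) :=
  (delta prefW prefF)^[Fintype.card (W × F)] Set.univ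

/-- `μ` is `S`-stable: `S`-admissible and no pair of `S` blocks it within `S`. -/
def SStable {W F : Type*} (prefW : W → F → F → Prop) (prefF : F → W → W → Prop)
    (S : Set (W × F)) (μ : W ≃ F) : Prop :=
  (∀ w, (w, μ w) ∈ S) ∧
  ∀ w f, (w, f) ∈ S → ¬ (prefW w f (μ w) ∧ prefF f w (μ.symm f))

/-- Arcs of the matching digraph `D(S)`: from `(w,f)` to `(w,f')` whenever `f' ≻_w f`,
and from `(w,f)` to `(w',f)` whenever `w' ≻_f w`. -/
def Arc {W F : Type*} (prefW : W → F → F → Prop) (prefF : F → W → W → Prop)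
    (S : Set (W × F)) (p q : W × F) : Prop :=
  p ∈ S ∧ q ∈ S ∧
    ((p.1 = q.1 ∧ prefW p.1 q.2 p.2) ∨ (p.2 = q.2 ∧ prefF p.2 q.1 p.1))

/-- `D(S)` contains a directed cycle: distinct vertices `c 0, …, c (n-1)` with `n ≥ 1`,
`c n = c 0`, and an arc from each vertex to the next. -/
def HasDirectedCycle {W F : Type*} (prefW : W → F → F → Prop)
    (prefF : F → W → W → Prop) (S : Set (W × F)) : Prop :=
  ∃ (n : ℕ) (c : Fin (n + 1) → W × F), 0 < n ∧
    Function.Injective (fun i : Fin n => c i.castSucc) ∧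
    c (Fin.last n) = c 0 ∧
    ∀ i : Fin n, Arc prefW prefF S (c i.castSucc) (c i.succ)

/-- The preference lists possess a cycle: there are `k ≥ 2`, distinct workers
`w_1, …, w_k` and distinct firms `f_1, …, f_k` (indexed by `ZMod k`) with
`f_{j+1} ≻_{w_j} f_j` and `w_j ≻_{f_j} w_{j-1}` for all `j`, indices modulo `k`. -/
def PrefCycle {W F : Type*} (prefW : W → F → F → Prop)
    (prefF : F → W → W → Prop) : Prop :=
  ∃ k : ℕ, 2 ≤ k ∧ ∃ (ws : ZMod k → W) (fs : ZMod k → F),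
    Function.Injective ws ∧ Function.Injective fs ∧
    ∀ j : ZMod k, prefW (ws j) (fs (j + 1)) (fs j) ∧ prefF (fs j) (ws j) (ws (j - 1))

/-- A nonempty subset of a finite strictly totally ordered type has a top element. -/
lemma exists_top {α : Type*} [Finite α] (r : α → α → Prop) [IsStrictTotalOrder α r]
    {s : Set α} (hs : s.Nonempty) : ∃ m ∈ s, ∀ x ∈ s, x ≠ m → r m x := by
  obtain ⟨m, hm, hmin⟩ := (Finite.wellFounded_of_trans_of_irrefl r).has_min s hs
  refine ⟨m, hm, fun x hx hne => ?_⟩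
  rcases trichotomous_of r m x with h | h | h
  · exact h
  · exact absurd h.symm hne
  · exact absurd h (hmin x hx)

/-- Iterating a deflationary operator on subsets of a finite type, starting from the full set,
reaches a fixed point after at most `Fintype.card α` steps. -/
lemma isFixedPt_iterate_card_univ {α : Type*} [Fintype α] {g : Set α → Set α}
    (hg : ∀ S, g S ⊆ S) : Function.IsFixedPt g (g^[Fintype.card α] Set.univ) := by
  have key : ∀ k, Function.IsFixedPt g (g^[k] Set.univ) ∨
      (g^[k] Set.univ).ncard + k ≤ Fintype.card α := by
    intro k
    induction k with
    | zero => right; simp [Set.ncard_univ]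
    | succ k ih =>
      rw [Function.iterate_succ_apply']
      by_cases hfix : Function.IsFixedPt g (g^[k] Set.univ)
      · left
        rwa [hfix.eq]
      · right
        have hlt : (g (g^[k] Set.univ)).ncard < (g^[k] Set.univ).ncard :=
          Set.ncard_lt_ncard ((hg _).ssubset_of_ne hfix)
        have := ih.resolve_left hfix
        omega
  refine (key _).elim id fun h => ?_
  have hempty : g^[Fintype.card α] Set.univ = ∅ :=
    (Set.ncard_eq_zero).1 (by omega)
  rw [hempty]
  exact Set.subset_empty_iff.1 (hg ∅)

section

variable {W F : Type*} {prefW : W → F → F → Prop} {prefF : F → W → W → Prop}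

lemma delta_subset (S : Set (W × F)) : delta prefW prefF S ⊆ S := fun _ h => h.1

lemma unattractive_swap (S : Set (W × F)) (w : W) (f : F) :
    Unattractive prefF prefW (Prod.swap ⁻¹' S) f w ↔ Unattractive prefW prefF S w f :=
  Or.comm

lemma delta_swap (S : Set (W × F)) :
    delta prefF prefW (Prod.swap ⁻¹' S) = Prod.swap ⁻¹' delta prefW prefF S := by
  ext ⟨f, w⟩
  exact and_congr_right fun _ => not_congr (unattractive_swap S w f)

lemma normalForm_swap [Fintype W] [Fintype F] :
    NormalForm F W prefF prefW = Prod.swap ⁻¹' NormalForm W F prefW prefF := by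
  have h : Function.Semiconj (fun S : Set (W × F) => Prod.swap ⁻¹' S)
      (delta prefW prefF) (delta prefF prefW) := fun S => (delta_swap S).symm
  have := h.iterate_right (Fintype.card (W × F)) Set.univ
  simp only [Set.preimage_univ] at this
  rw [NormalForm, NormalForm, this, Fintype.card_congr (Equiv.prodComm F W)]

lemma delta_normalForm [Fintype W] [Fintype F] :
    delta prefW prefF (NormalForm W F prefW prefF) = NormalForm W F prefW prefF :=
  isFixedPt_iterate_card_univ delta_subset

lemma IsStableMatching.swap {μ : W ≃ F} (h : IsStableMatching prefW prefF μ) :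
    IsStableMatching prefF prefW μ.symm :=
  fun f w hb => h w f hb.symm

/-- Pairs of a stable matching contained in `S` are attractive in `S`. -/
lemma IsStableMatching.mem_delta {μ : W ≃ F} (h : IsStableMatching prefW prefF μ)
    (hW : ∀ w, IsStrictTotalOrder F (prefW w)) (hF : ∀ f, IsStrictTotalOrder W (prefF f))
    {S : Set (W × F)} (hS : ∀ w, (w, μ w) ∈ S) (w : W) :
    (w, μ w) ∈ delta prefW prefF S := by
  refine ⟨hS w, ?_⟩
  rintro (⟨f, -, hpref, htop⟩ | ⟨w', -, hpref, htop⟩)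
  · refine h w f ⟨hpref, htop _ ?_ (by simpa using hS (μ.symm f))⟩
    rintro rfl
    exact irrefl_of (prefW (μ.symm f)) f (by simpa using hpref)
  · refine h w' (μ w) ⟨htop _ ?_ (hS w'), by simpa using hpref⟩
    intro heq
    obtain rfl := μ.injective heq
    exact irrefl_of (prefF (μ w')) w' hpref

/-- Stable matchings survive the iterated deletion of unattractive pairs. -/
lemma IsStableMatching.mem_normalForm [Fintype W] [Fintype F] {μ : W ≃ F}
    (h : IsStableMatching prefW prefF μ)
    (hW : ∀ w, IsStrictTotalOrder F (prefW w)) (hF : ∀ f, IsStrictTotalOrder W (prefF f))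
    (w : W) : (w, μ w) ∈ NormalForm W F prefW prefF := by
  have key : ∀ k w, (w, μ w) ∈ (delta prefW prefF)^[k] Set.univ := by
    intro k
    induction k with
    | zero => simp
    | succ k ih =>
      rw [Function.iterate_succ_apply']
      exact h.mem_delta hW hF ih
  exact key _ w

lemma SStable.swap {S : Set (W × F)} {μ : W ≃ F} (h : SStable prefW prefF S μ) :
    SStable prefF prefW (Prod.swap ⁻¹' S) μ.symm :=
  ⟨fun f => by simpa using h.1 (μ.symm f), fun f w hS hb => h.2 w f hS hb.symm⟩

/-- In a `delta S`-stable matching, no worker prefers to its match a firm whose top choice in `S`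
is that worker. -/
lemma SStable.not_prefers_of_top [Finite F] (hW : ∀ w, IsStrictTotalOrder F (prefW w))
    (hF : ∀ f, IsStrictTotalOrder W (prefF f)) {S : Set (W × F)} {μ : W ≃ F}
    (h : SStable prefW prefF (delta prefW prefF S) μ) {w : W} {f : F} (hmem : (w, f) ∈ S)
    (htop : ∀ w', w' ≠ w → (w', f) ∈ S → prefF f w w') : ¬ prefW w f (μ w) := by
  intro hpref
  obtain ⟨g, ⟨hgS, hgtop⟩, hbest⟩ := exists_top (prefW w)
    (s := {g | (w, g) ∈ S ∧ ∀ w', w' ≠ w → (w', g) ∈ S → prefF g w w'}) ⟨f, hmem, htop⟩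
  have hgpref : prefW w g (μ w) := by
    by_cases hfg : f = g
    · exact hfg ▸ hpref
    · exact trans_of (prefW w) (hbest f ⟨hmem, htop⟩ hfg) hpref
  have hgdelta : (w, g) ∈ delta prefW prefF S := by
    refine ⟨hgS, ?_⟩
    rintro (⟨f', hf'S, hf', hf'top⟩ | ⟨w', hw'S, hw', -⟩)
    · have hne : f' ≠ g := by
        rintro rfl
        exact irrefl_of (prefW w) _ hf'
      exact asymm_of (prefW w) hf' (hbest f' ⟨hf'S, hf'top⟩ hne)
    · have hne : w' ≠ w := by
        rintro rfl
        exact irrefl_of (prefF g) _ hw'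
      exact asymm_of (prefF g) hw' (hgtop w' hne hw'S)
  refine h.2 w g hgdelta ⟨hgpref, hgtop _ ?_ ?_⟩
  · rintro rfl
    exact irrefl_of (prefW (μ.symm g)) g (by simpa using hgpref)
  · simpa using (h.1 (μ.symm g)).1

lemma SStable.of_delta [Finite W] [Finite F] (hW : ∀ w, IsStrictTotalOrder F (prefW w))
    (hF : ∀ f, IsStrictTotalOrder W (prefF f)) {S : Set (W × F)} {μ : W ≃ F}
    (h : SStable prefW prefF (delta prefW prefF S) μ) : SStable prefW prefF S μ := by
  refine ⟨fun w => (h.1 w).1, fun w f hS hb => ?_⟩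
  by_cases hun : Unattractive prefW prefF S w f
  · rcases hun with ⟨f', hf'S, hf', htop⟩ | ⟨w', hw'S, hw', htop⟩
    · exact h.not_prefers_of_top hW hF hf'S htop (trans_of (prefW w) hf' hb.1)
    · have hswap := h.swap
      rw [← delta_swap] at hswap
      exact hswap.not_prefers_of_top hF hW (w := f) (f := w') hw'S htop
        (trans_of (prefF f) hw' hb.2)
  · exact h.2 w f ⟨hS, hun⟩ hb

lemma SStable.isStableMatching_of_normalForm [Fintype W] [Fintype F]
    (hW : ∀ w, IsStrictTotalOrder F (prefW w)) (hF : ∀ f, IsStrictTotalOrder W (prefF f))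
    {μ : W ≃ F} (h : SStable prefW prefF (NormalForm W F prefW prefF) μ) :
    IsStableMatching prefW prefF μ := by
  have key : ∀ k, SStable prefW prefF ((delta prefW prefF)^[k] Set.univ) μ →
      SStable prefW prefF Set.univ μ := by
    intro k
    induction k with
    | zero => exact id
    | succ k ih =>
      rw [Function.iterate_succ_apply']
      exact fun h => ih (h.of_delta hW hF)
  exact fun w f => (key _ h).2 w f (Set.mem_univ _)

/-- Matching every worker to its top firm in the normal form is a stable matching. -/
lemma exists_isStableMatching_top [Fintype W] [Fintype F]
    (hW : ∀ w, IsStrictTotalOrder F (prefW w)) (hF : ∀ f, IsStrictTotalOrder W (prefF f))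
    {μ : W ≃ F} (hμ : IsStableMatching prefW prefF μ) :
    ∃ ν : W ≃ F, IsStableMatching prefW prefF ν ∧
      ∀ w f, (w, f) ∈ NormalForm W F prefW prefF → f ≠ ν w → prefW w (ν w) f := by
  choose T hTmem hTtop using fun w => exists_top (prefW w)
    (s := {f | (w, f) ∈ NormalForm W F prefW prefF}) ⟨μ w, hμ.mem_normalForm hW hF w⟩
  have hnot : ∀ w w', T w = T w' → ¬ prefF (T w) w w' := by
    intro w w' heq hpref
    have hmem : (w', T w) ∈ NormalForm W F prefW prefF := heq ▸ hTmem w'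
    rw [← delta_normalForm] at hmem
    exact hmem.2 (Or.inr ⟨w, hTmem w, hpref, fun f hne hf => hTtop w f hf hne⟩)
  have hinj : Function.Injective T := by
    intro w w' heq
    rcases trichotomous_of (prefF (T w)) w w' with h | h | h
    · exact absurd h (hnot w w' heq)
    · exact h
    · exact absurd (heq ▸ h) (hnot w' w heq.symm)
  let ν : W ≃ F := Equiv.ofBijective T
    ((Fintype.bijective_iff_injective_and_card T).2 ⟨hinj, Fintype.card_congr μ⟩)
  refine ⟨ν, SStable.isStableMatching_of_normalForm hW hF ⟨hTmem, fun w f hmem hb => ?_⟩, hTtop⟩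
  have hne : f ≠ T w := by
    rintro rfl
    exact irrefl_of (prefW w) _ hb.1
  exact asymm_of (prefW w) hb.1 (hTtop w f hmem hne)

end

/-- If the matching problem has a unique stable matching `μ`, then the normal form
equals the graph of `μ`. -/
theorem normalForm_eq_graph_of_unique {W F : Type*} [Fintype W] [Fintype F] [Nonempty W]
    (hcard : Fintype.card W = Fintype.card F)
    (prefW : W → F → F → Prop) (prefF : F → W → W → Prop)
    (hW : ∀ w, IsStrictTotalOrder F (prefW w))
    (hF : ∀ f, IsStrictTotalOrder W (prefF f))
    (μ : W ≃ F) (hμ : IsStableMatching prefW prefF μ)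
    (huniq : ∀ μ' : W ≃ F, IsStableMatching prefW prefF μ' → μ' = μ) :
    NormalForm W F prefW prefF = Set.range fun w => (w, μ w) := by
  ext ⟨w, f⟩
  simp only [Set.mem_range, Prod.mk.injEq, exists_eq_left]
  constructor
  · intro hmem
    by_contra hne
    obtain ⟨ν, hν, hνtop⟩ := exists_isStableMatching_top hW hF hμ
    obtain rfl := huniq ν hν
    obtain ⟨η, hη, hηtop⟩ := exists_isStableMatching_top hF hW hμ.swap
    have hην : η.symm = ν := huniq _ hη.swap
    rw [normalForm_swap] at hηtop
    have hηw : η (ν w) = w := by simp [← hην]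
    have hdelta := hmem
    rw [← delta_normalForm] at hdelta
    refine hdelta.2 (Or.inl ⟨ν w, hμ.mem_normalForm hW hF w, hνtop w f hmem (Ne.symm hne), ?_⟩)
    intro w' hw' hmem'
    simpa [hηw] using hηtop (ν w) w' hmem' (by rwa [hηw])
  · rintro rfl
    exact hμ.mem_normalForm hW hF w
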